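/- arXiv:2012.08766 — 2 statements merged into one kernel-verified Lean document; each statement's English description precedes it below -/
import Mathlib

section
/- Let 1<p<∞, η>0 and α < 1/p'. Then for every u ∈ C_c^1((0,η]) one has ∫_0^η |u'(t)|^p t^{αp} dt ≥ Λ_{α,p} ∫_0^η |u(t)|^p t^{(α-1)p} dt + Λ_{α,p}^{1/p'} η^{αp - (p-1)} |u(η)|^p. -/
open MeasureTheory Set

/-- If `f` vanishes on `(0, b]` and is continuous on `[b, η]`, its integral over `[0, η]` only sees
`[b, η]`. -/
theorem intervalIntegral_eq_of_eq_zero_left {f : ℝ → ℝ} {b η : ℝ} (hb : 0 < b) (hbη : b ≤ η)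
    (hf : ∀ t ∈ Ioc 0 b, f t = 0) (hc : ContinuousOn f (Icc b η)) :
    ∫ t in (0:ℝ)..η, f t = ∫ t in b..η, f t := by
  have h_eq : EqOn f (fun _ => 0) (uIoc 0 b) := by
    rw [uIoc_of_le hb.le]; exact hf
  have h_int : IntervalIntegrable f volume 0 b :=
    (intervalIntegrable_const (c := (0:ℝ))).congr h_eq.symm
  have h_zero : ∫ t in (0:ℝ)..b, f t = 0 := by
    rw [intervalIntegral.integral_congr_ae (g := fun _ => (0:ℝ))
      (Filter.Eventually.of_forall h_eq)]
    simp
  rw [← intervalIntegral.integral_add_adjacent_intervals h_int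
    (hc.intervalIntegrable_of_Icc hbη), h_zero, zero_add]

/-- Young's inequality in the form `p A B^(p-1) ≤ A^p + (p-1) B^p`. -/
theorem mul_mul_rpow_sub_one_le {p A B : ℝ} (hp : 1 < p) (hA : 0 ≤ A) (hB : 0 ≤ B) :
    p * (A * B ^ (p - 1)) ≤ A ^ p + (p - 1) * B ^ p := by
  have hp0 : 0 < p := by linarith
  have hp1 : p - 1 ≠ 0 := by linarith
  have hY := Real.young_inequality_of_nonneg hA (Real.rpow_nonneg hB (p - 1))
    (Real.HolderConjugate.conjExponent hp)
  have hBp : (B ^ (p - 1)) ^ (p.conjExponent) = B ^ p := by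
    rw [← Real.rpow_mul hB, Real.conjExponent]
    congr 1
    field_simp
  rw [hBp, Real.conjExponent] at hY
  have h := mul_le_mul_of_nonneg_left hY hp0.le
  have e : p * (A ^ p / p + B ^ p / (p / (p - 1))) = A ^ p + (p - 1) * B ^ p := by
    field_simp
  rwa [e] at h

/-- Pointwise bound behind the power-weight Hardy inequality: the derivative of
`c^(p-1) t^(αp-(p-1)) |u|^p`, with `x = u t` and `y = u' t`, is at most the difference of the
two integrands. -/
theorem hardy_power_pointwise {p α c t x y : ℝ} (hp : 1 < p) (hc : 0 < c)
    (hcα : c = (p - 1) / p - α) (ht : 0 < t) :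
    c ^ (p - 1) * (((α * p - (p - 1)) * t ^ (α * p - (p - 1) - 1)) * |x| ^ p
        + t ^ (α * p - (p - 1)) * (p * |x| ^ (p - 2) * x * y))
      ≤ |y| ^ p * t ^ (α * p) - c ^ p * (|x| ^ p * t ^ ((α - 1) * p)) := by
  have hp0 : 0 < p := by linarith
  have hY := mul_mul_rpow_sub_one_le hp (A := |y| * t ^ α) (B := c * |x| * t ^ (α - 1))
    (by positivity) (by positivity)
  rw [Real.mul_rpow (by positivity) (by positivity), Real.mul_rpow (by positivity) (by positivity),
    Real.mul_rpow (by positivity) (by positivity), Real.mul_rpow (by positivity) (by positivity),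
    Real.mul_rpow (by positivity) (by positivity), ← Real.rpow_mul ht.le, ← Real.rpow_mul ht.le,
    ← Real.rpow_mul ht.le] at hY
  have h_weight : t ^ α * t ^ ((α - 1) * (p - 1)) = t ^ (α * p - (p - 1)) := by
    rw [← Real.rpow_add ht]; congr 1; ring
  have h_exp : α * p - (p - 1) - 1 = (α - 1) * p := by ring
  have h_coef : α * p - (p - 1) = -(c * p) := by
    rw [hcα]; field_simp; ring
  have h_c : c ^ (p - 1) * c = c ^ p := by
    rw [← Real.rpow_add_one hc.ne']; congr 1; ring
  have h_x : |x| ^ (p - 2) * x * y ≤ |x| ^ (p - 1) * |y| := by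
    rcases eq_or_ne x 0 with rfl | hx
    · simp only [mul_zero, zero_mul]; positivity
    · have h1 : |x| ^ (p - 1) = |x| ^ (p - 2) * |x| := by
        rw [← Real.rpow_add_one (abs_ne_zero.mpr hx)]; congr 1; ring
      rw [h1, mul_assoc, mul_assoc, ← abs_mul]
      exact mul_le_mul_of_nonneg_left (le_abs_self _) (by positivity)
  have h_cross := mul_le_mul_of_nonneg_left h_x
    (show 0 ≤ p * c ^ (p - 1) * t ^ (α * p - (p - 1)) by positivity)
  rw [h_exp]
  calc _ = (α * p - (p - 1)) * c ^ (p - 1) * (t ^ ((α - 1) * p) * |x| ^ p)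
        + p * c ^ (p - 1) * t ^ (α * p - (p - 1)) * (|x| ^ (p - 2) * x * y) := by ring
    _ ≤ (α * p - (p - 1)) * c ^ (p - 1) * (t ^ ((α - 1) * p) * |x| ^ p)
        + p * c ^ (p - 1) * t ^ (α * p - (p - 1)) * (|x| ^ (p - 1) * |y|) := by gcongr
    _ = -p * c ^ p * (t ^ ((α - 1) * p) * |x| ^ p)
        + p * (|y| * t ^ α * (c ^ (p - 1) * |x| ^ (p - 1) * t ^ ((α - 1) * (p - 1)))) := by
      rw [← h_weight, ← h_c]
      linear_combination c ^ (p - 1) * (t ^ ((α - 1) * p) * |x| ^ p) * h_coef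
    _ ≤ _ := by linarith

/-- Power-weight Hardy inequality in the subcritical case
`α < 1/p' = (p-1)/p`, with positive one-sided boundary term. -/
theorem hardy_power_subcritical (p η α : ℝ) (hp : 1 < p) (hη : 0 < η)
    (hα : α < (p - 1) / p)
    (u u' : ℝ → ℝ)
    (hu : ∀ t ∈ Set.Ioc (0:ℝ) η, HasDerivWithinAt u (u' t) (Set.Ioc (0:ℝ) η) t)
    (hu'c : ContinuousOn u' (Set.Ioc (0:ℝ) η))
    (hsupp : ∃ a, 0 < a ∧ ∀ t ≤ a, u t = 0) :
    (∫ t in (0:ℝ)..η, |u' t| ^ p * t ^ (α * p))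
    ≥ |(p - 1) / p - α| ^ p * (∫ t in (0:ℝ)..η, |u t| ^ p * t ^ ((α - 1) * p))
      + (|(p - 1) / p - α| ^ p) ^ ((p - 1) / p) * η ^ (α * p - (p - 1)) * |u η| ^ p := by
  obtain ⟨a, ha, hua⟩ := hsupp
  have hp0 : 0 < p := by linarith
  obtain ⟨c, hcα⟩ : ∃ c, c = (p - 1) / p - α := ⟨_, rfl⟩
  have hc : 0 < c := by rw [hcα]; linarith
  rw [← hcα, abs_of_pos hc, ← Real.rpow_mul hc.le, mul_div_cancel₀ _ hp0.ne']
  obtain ⟨b, hb, hba, hbη⟩ : ∃ b, 0 < b ∧ b < a ∧ b < η :=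
    ⟨min a η / 2, by positivity, by linarith [min_le_left a η], by linarith [min_le_right a η]⟩
  have hsub : Icc b η ⊆ Ioc 0 η := fun t ht => ⟨hb.trans_le ht.1, ht.2⟩
  have hderiv : ∀ t ∈ Ioo 0 η, HasDerivAt u (u' t) t := fun t ht =>
    (hu t ⟨ht.1, ht.2.le⟩).hasDerivAt (Ioc_mem_nhds ht.1 ht.2)
  have hu'0 : ∀ t ∈ Ioc 0 b, u' t = 0 := fun t ht => by
    have h_loc : u =ᶠ[nhds t] fun _ => 0 := by
      filter_upwards [Iio_mem_nhds (ht.2.trans_lt hba)] with s hs using hua s (le_of_lt hs)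
    exact (hderiv t ⟨ht.1, ht.2.trans_lt hbη⟩).unique
      ((hasDerivAt_const t (0:ℝ)).congr_of_eventuallyEq h_loc)
  have huc : ContinuousOn u (Icc b η) := fun t ht =>
    (hu t (hsub ht)).continuousWithinAt.mono hsub
  have hu'c : ContinuousOn u' (Icc b η) := hu'c.mono hsub
  have hpow : ∀ s : ℝ, ContinuousOn (fun t : ℝ => t ^ s) (Icc b η) := fun s =>
    continuousOn_id.rpow_const fun t ht => Or.inl (hsub ht).1.ne'
  have habs : ∀ {v : ℝ → ℝ}, ContinuousOn v (Icc b η) →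
      ContinuousOn (fun t => |v t| ^ p) (Icc b η) := fun hv =>
    hv.abs.rpow_const fun t _ => Or.inr hp0.le
  have hcont₁ : ContinuousOn (fun t => |u' t| ^ p * t ^ (α * p)) (Icc b η) :=
    (habs hu'c).mul (hpow (α * p))
  have hcont₂ : ContinuousOn (fun t => |u t| ^ p * t ^ ((α - 1) * p)) (Icc b η) :=
    (habs huc).mul (hpow ((α - 1) * p))
  rw [intervalIntegral_eq_of_eq_zero_left hb hbη.le
      (fun t ht => by simp [hu'0 t ht, Real.zero_rpow hp0.ne']) hcont₁,
    intervalIntegral_eq_of_eq_zero_left hb hbη.le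
      (fun t ht => by simp [hua t (ht.2.trans hba.le), Real.zero_rpow hp0.ne']) hcont₂]
  have key := intervalIntegral.sub_le_integral_of_hasDeriv_right_of_le
    (g := fun t => c ^ (p - 1) * (t ^ (α * p - (p - 1)) * |u t| ^ p))
    (φ := fun t => |u' t| ^ p * t ^ (α * p) - c ^ p * (|u t| ^ p * t ^ ((α - 1) * p)))
    hbη.le (((hpow _).mul (habs huc)).const_smul (c ^ (p - 1)))
    (fun t ht => by
      have h0 : 0 < t := hb.trans ht.1
      have h1 := Real.hasDerivAt_rpow_const (x := t) (p := α * p - (p - 1)) (Or.inl h0.ne')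
      have h2 := (hasDerivAt_abs_rpow (u t) hp).comp t (hderiv t ⟨h0, ht.2⟩)
      exact ((h1.mul h2).const_mul (c ^ (p - 1))).hasDerivWithinAt)
    (hcont₁.sub (hcont₂.const_smul (c ^ p))).integrableOn_Icc
    (fun t ht => hardy_power_pointwise hp hc hcα (hb.trans ht.1))
  rw [intervalIntegral.integral_sub (hcont₁.intervalIntegrable_of_Icc hbη.le)
    ((hcont₂.intervalIntegrable_of_Icc hbη.le).const_mul _),
    intervalIntegral.integral_const_mul] at key
  simp only [hua b hba.le, abs_zero, Real.zero_rpow hp0.ne', mul_zero, sub_zero] at key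
  linarith
end

section
/- Let 1<p<∞, η>0 and w ∈ Q(ℝ₊). For ε>0 define u_ε(t) = f_η(t)^{1/p' + ε} on (0,η]. Then ∫_0^η |u_ε'(t)|^p W_p(t) dt = (1/p' + ε)^p f_η(η)^{εp} / (pε) and Λ_p ∫_0^η |u_ε(t)|^p W_p(t) / F_η(t)^p dt = (1/p')^p f_η(η)^{εp} / (pε); consequently ( ∫_0^η |u_ε'(t)|^p W_p(t) dt − Λ_p ∫_0^η |u_ε(t)|^p W_p(t) / F_η(t)^p dt ) · f_η(η)^{p-1} / u_ε(η)^p tends to Λ_p^{1/p'} as ε → 0⁺, so the boundary constant Λ_p^{1/p'} in the Hardy inequality ∫_0^η |u'|^p W_p dt ≥ Λ_p ∫_0^η |u|^p W_p / F_η^p dt + Λ_p^{1/p'} f_η(η)^{1-p} |u(η)|^p cannot be replaced by any larger constant. -/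
open MeasureTheory Set

/-- `f_η(t) = ∫_0^t w(s)⁻¹ ds`  (case `w ∈ Q(ℝ₊)`). -/
noncomputable def fQ (w : ℝ → ℝ) (t : ℝ) : ℝ := ∫ s in (0:ℝ)..t, (w s)⁻¹

/-- `F_η(t) = w(t) f_η(t)`. -/
noncomputable def FQ (w : ℝ → ℝ) (t : ℝ) : ℝ := w t * fQ w t

/-- `W_p(t) = w(t)^(p-1)`. -/
noncomputable def Wp (w : ℝ → ℝ) (p t : ℝ) : ℝ := w t ^ (p - 1)

/-- The test function `u_ε(t) = f_η(t)^(1/p' + ε)`, with `1/p' = (p-1)/p`. -/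
noncomputable def uTest (w : ℝ → ℝ) (p ε t : ℝ) : ℝ := fQ w t ^ ((p - 1) / p + ε)

section PowerAlgebra

variable {p ε x y k : ℝ}

/-- Energy density of `u = x ^ (1/p' + ε)` with slope factor `k`. -/
lemma abs_rpow_mul_div_rpow_mul_rpow_eq (hp : 1 < p) (hx : 0 < x) (hy : 0 < y) (hk : 0 ≤ k) :
    |k * x ^ ((p - 1) / p + ε - 1) * y⁻¹| ^ p * y ^ (p - 1)
      = k ^ p * (x ^ (ε * p - 1) * y⁻¹) := by
  have hexp : ((p - 1) / p + ε - 1) * p = ε * p - 1 := by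
    field_simp
    ring
  rw [abs_of_nonneg (by positivity), Real.mul_rpow (by positivity) (by positivity),
    Real.mul_rpow hk (by positivity), ← Real.rpow_mul hx.le, hexp, Real.inv_rpow hy.le,
    Real.rpow_sub_one hy.ne']
  have := (Real.rpow_pos_of_pos hy p).ne'
  field_simp

/-- Potential density of `u = k * x ^ (1/p' + ε)`. -/
lemma abs_mul_rpow_rpow_mul_rpow_div_eq (hp : 1 < p) (hx : 0 < x) (hy : 0 < y) (hk : 0 ≤ k) :
    |k * x ^ ((p - 1) / p + ε)| ^ p * y ^ (p - 1) / (y * x) ^ p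
      = k ^ p * (x ^ (ε * p - 1) * y⁻¹) := by
  have hexp : ((p - 1) / p + ε) * p = (ε * p - 1) + p := by
    field_simp
    ring
  rw [abs_of_nonneg (by positivity), Real.mul_rpow hk (by positivity),
    ← Real.rpow_mul hx.le, hexp, Real.rpow_add hx, Real.mul_rpow hy.le hx.le,
    Real.rpow_sub_one hy.ne']
  have := (Real.rpow_pos_of_pos hy p).ne'
  have := (Real.rpow_pos_of_pos hx p).ne'
  field_simp

end PowerAlgebra

section Primitive

variable {w : ℝ → ℝ} {p η ε t : ℝ}

lemma intervalIntegrable_inv_of_Q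
    (hwQ : ∀ b, 0 < b → IntegrableOn (fun s => (w s)⁻¹) (Ioo 0 b)) (ht : 0 < t) :
    IntervalIntegrable (fun s => (w s)⁻¹) volume 0 t :=
  (intervalIntegrable_iff_integrableOn_Ioo_of_le ht.le).2 (hwQ t ht)

lemma fQ_pos (hw_pos : ∀ t, 0 < t → 0 < w t)
    (hwQ : ∀ b, 0 < b → IntegrableOn (fun s => (w s)⁻¹) (Ioo 0 b)) (ht : 0 < t) :
    0 < fQ w t :=
  intervalIntegral.intervalIntegral_pos_of_pos_on (intervalIntegrable_inv_of_Q hwQ ht)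
    (fun s hs => inv_pos.2 (hw_pos s hs.1)) ht

lemma fQ_zero : fQ w 0 = 0 := by simp [fQ]

lemma continuousOn_inv_Ioi (hw_pos : ∀ t, 0 < t → 0 < w t) (hw : ContinuousOn w (Ioi 0)) :
    ContinuousOn (fun s => (w s)⁻¹) (Ioi 0) :=
  hw.inv₀ fun s hs => (hw_pos s hs).ne'

lemma hasDerivAt_fQ (hw_pos : ∀ t, 0 < t → 0 < w t) (hw : ContinuousOn w (Ioi 0))
    (hwQ : ∀ b, 0 < b → IntegrableOn (fun s => (w s)⁻¹) (Ioo 0 b)) (ht : 0 < t) :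
    HasDerivAt (fQ w) (w t)⁻¹ t := by
  have hc := continuousOn_inv_Ioi hw_pos hw
  exact intervalIntegral.integral_hasDerivAt_right (intervalIntegrable_inv_of_Q hwQ ht)
    (hc.stronglyMeasurableAtFilter isOpen_Ioi t ht) (hc.continuousAt (Ioi_mem_nhds ht))

lemma continuousOn_fQ
    (hwQ : ∀ b, 0 < b → IntegrableOn (fun s => (w s)⁻¹) (Ioo 0 b)) (hη : 0 < η) :
    ContinuousOn (fQ w) (Icc 0 η) := by
  have := intervalIntegral.continuousOn_primitive_interval'
    (intervalIntegrable_inv_of_Q hwQ hη) left_mem_uIcc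
  rwa [uIcc_of_le hη.le] at this

/-- The common density of both sides of the Hardy inequality on `uTest w p ε`. -/
lemma intervalIntegrable_and_integral_fQ_rpow (hp : 1 < p) (hη : 0 < η) (hε : 0 < ε)
    (hw_pos : ∀ t, 0 < t → 0 < w t) (hw : ContinuousOn w (Ioi 0))
    (hwQ : ∀ b, 0 < b → IntegrableOn (fun s => (w s)⁻¹) (Ioo 0 b)) :
    IntervalIntegrable (fun t => fQ w t ^ (ε * p - 1) * (w t)⁻¹) volume 0 η ∧
      ∫ t in (0:ℝ)..η, fQ w t ^ (ε * p - 1) * (w t)⁻¹ = fQ w η ^ (ε * p) / (p * ε) := by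
  have hεp : 0 < ε * p := by positivity
  have hcont : ContinuousOn (fun t => fQ w t ^ (ε * p) / (p * ε)) (Icc 0 η) :=
    ((continuousOn_fQ hwQ hη).rpow_const fun _ _ => Or.inr hεp.le).div_const _
  have hderiv : ∀ t ∈ Ioo 0 η, HasDerivAt (fun t => fQ w t ^ (ε * p) / (p * ε))
      (fQ w t ^ (ε * p - 1) * (w t)⁻¹) t := by
    intro t ht
    have := ((hasDerivAt_fQ hw_pos hw hwQ ht.1).rpow_const (p := ε * p)
      (Or.inl (fQ_pos hw_pos hwQ ht.1).ne')).div_const (p * ε)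
    refine this.congr_deriv ?_
    field_simp
  have hint : IntervalIntegrable (fun t => fQ w t ^ (ε * p - 1) * (w t)⁻¹) volume 0 η := by
    rw [intervalIntegrable_iff_integrableOn_Ioc_of_le hη.le]
    refine intervalIntegral.integrableOn_deriv_of_nonneg hcont hderiv fun t ht => ?_
    have := fQ_pos hw_pos hwQ ht.1
    have := hw_pos t ht.1
    positivity
  refine ⟨hint, ?_⟩
  rw [intervalIntegral.integral_eq_sub_of_hasDerivAt_of_le hη.le hcont hderiv hint, fQ_zero,
    Real.zero_rpow hεp.ne', zero_div, sub_zero]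

lemma deriv_uTest (hw_pos : ∀ t, 0 < t → 0 < w t) (hw : ContinuousOn w (Ioi 0))
    (hwQ : ∀ b, 0 < b → IntegrableOn (fun s => (w s)⁻¹) (Ioo 0 b)) (ht : 0 < t) :
    deriv (uTest w p ε) t
      = ((p - 1) / p + ε) * fQ w t ^ ((p - 1) / p + ε - 1) * (w t)⁻¹ := by
  have : HasDerivAt (uTest w p ε) _ t := (hasDerivAt_fQ hw_pos hw hwQ ht).rpow_const
    (p := (p - 1) / p + ε) (Or.inl (fQ_pos hw_pos hwQ ht).ne')
  rw [this.deriv]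
  ring

lemma integral_abs_deriv_uTest (hp : 1 < p) (hη : 0 < η) (hε : 0 < ε)
    (hw_pos : ∀ t, 0 < t → 0 < w t) (hw : ContinuousOn w (Ioi 0))
    (hwQ : ∀ b, 0 < b → IntegrableOn (fun s => (w s)⁻¹) (Ioo 0 b)) :
    ∫ t in (0:ℝ)..η, |deriv (uTest w p ε) t| ^ p * Wp w p t
      = ((p - 1) / p + ε) ^ p * fQ w η ^ (ε * p) / (p * ε) := by
  have ha : 0 ≤ (p - 1) / p + ε := by
    have : 0 < p - 1 := by linarith
    positivity
  rw [mul_div_assoc, ← (intervalIntegrable_and_integral_fQ_rpow hp hη hε hw_pos hw hwQ).2,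
    ← intervalIntegral.integral_const_mul]
  refine intervalIntegral.integral_congr_Ioo_of_le hη.le fun t ht => ?_
  simp only [Wp]
  rw [deriv_uTest hw_pos hw hwQ ht.1]
  exact abs_rpow_mul_div_rpow_mul_rpow_eq hp (fQ_pos hw_pos hwQ ht.1) (hw_pos t ht.1) ha

lemma integral_abs_uTest (hp : 1 < p) (hη : 0 < η) (hε : 0 < ε)
    (hw_pos : ∀ t, 0 < t → 0 < w t) (hw : ContinuousOn w (Ioi 0))
    (hwQ : ∀ b, 0 < b → IntegrableOn (fun s => (w s)⁻¹) (Ioo 0 b)) :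
    ∫ t in (0:ℝ)..η, |uTest w p ε t| ^ p * Wp w p t / FQ w t ^ p
      = fQ w η ^ (ε * p) / (p * ε) := by
  rw [← (intervalIntegrable_and_integral_fQ_rpow hp hη hε hw_pos hw hwQ).2]
  refine intervalIntegral.integral_congr_Ioo_of_le hη.le fun t ht => ?_
  simpa [uTest, Wp, FQ] using abs_mul_rpow_rpow_mul_rpow_div_eq (ε := ε) hp
    (fQ_pos hw_pos hwQ ht.1) (hw_pos t ht.1) zero_le_one

end Primitive

section Truncation

open Filter Topology

lemma hasDerivAt_max_zero_sq (x : ℝ) :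
    HasDerivAt (fun y : ℝ => max 0 y ^ 2) (2 * max 0 x) x := by
  rcases lt_trichotomy x 0 with hx | rfl | hx
  · rw [max_eq_left hx.le, mul_zero]
    refine (hasDerivAt_const x (0:ℝ)).congr_of_eventuallyEq ?_
    filter_upwards [Iio_mem_nhds hx] with y hy
    simp [max_eq_left (mem_Iio.1 hy).le]
  · rw [hasDerivAt_iff_isLittleO_nhds_zero]
    have hsq : (fun h : ℝ => h ^ 2) =o[𝓝 0] fun h : ℝ => h := by
      simpa using Asymptotics.isLittleO_pow_pow (𝕜 := ℝ) (show 1 < 2 by norm_num)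
    refine Asymptotics.IsBigO.trans_isLittleO (Asymptotics.IsBigO.of_bound 1 ?_) hsq
    refine Eventually.of_forall fun h => ?_
    simp only [zero_add, max_self, mul_zero, smul_zero, sub_zero, norm_pow, one_mul]
    norm_num
    rcases le_total h 0 with hh | hh <;> simp [hh, sq_nonneg]
  · rw [max_eq_right hx.le]
    have h2 : HasDerivAt (fun y : ℝ => y ^ 2) (2 * x) x := by simpa using hasDerivAt_pow 2 x
    refine h2.congr_of_eventuallyEq ?_
    filter_upwards [Ioi_mem_nhds hx] with y hy
    simp [max_eq_right (mem_Ioi.1 hy).le]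

/-- A cut-off at level `δ`, vanishing for `0 < s ≤ δ` and tending to `1` as `δ → 0`. -/
noncomputable def cutoff (δ s : ℝ) : ℝ := max 0 (1 - δ / s)

variable {δ s a : ℝ}

lemma cutoff_nonneg : 0 ≤ cutoff δ s := le_max_left _ _

lemma cutoff_le_one (hδ : 0 < δ) (hs : 0 < s) : cutoff δ s ≤ 1 :=
  max_le zero_le_one (sub_le_self 1 (by positivity))

lemma cutoff_eq_zero (hs : 0 < s) (h : s ≤ δ) : cutoff δ s = 0 :=
  max_eq_left (sub_nonpos.2 ((one_le_div hs).2 h))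

lemma cutoff_mul_div_le_one (hδ : 0 < δ) (hs : 0 < s) : cutoff δ s * (δ / s) ≤ 1 := by
  rcases le_total s δ with h | h
  · simp [cutoff_eq_zero hs h]
  · exact mul_le_one₀ (cutoff_le_one hδ hs) (by positivity) ((div_le_one hs).2 h)

lemma tendsto_div_const_nhdsGT_zero : Tendsto (fun δ : ℝ => δ / s) (𝓝[>] 0) (𝓝 0) := by
  have : Tendsto (fun δ : ℝ => δ / s) (𝓝 0) (𝓝 (0 / s)) := tendsto_id.div_const s
  rw [zero_div] at this
  exact this.mono_left nhdsWithin_le_nhds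

lemma tendsto_cutoff : Tendsto (fun δ : ℝ => cutoff δ s) (𝓝[>] 0) (𝓝 1) := by
  have := (tendsto_const_nhds (x := (0:ℝ))).max
    ((tendsto_const_nhds (x := (1:ℝ))).sub (tendsto_div_const_nhdsGT_zero (s := s)))
  simpa [cutoff] using this

/-- The logarithmic slope factor of `s ↦ cutoff δ s ^ 2 * s ^ a`. -/
noncomputable def cutoffSlope (a δ s : ℝ) : ℝ :=
  a * cutoff δ s ^ 2 + 2 * (cutoff δ s * (δ / s))

lemma cutoffSlope_nonneg (ha : 0 ≤ a) (hδ : 0 < δ) (hs : 0 < s) : 0 ≤ cutoffSlope a δ s := by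
  have := cutoff_nonneg (δ := δ) (s := s)
  unfold cutoffSlope
  positivity

lemma cutoffSlope_le (ha : 0 ≤ a) (hδ : 0 < δ) (hs : 0 < s) : cutoffSlope a δ s ≤ a + 2 := by
  have h1 : cutoff δ s ^ 2 ≤ 1 := pow_le_one₀ cutoff_nonneg (cutoff_le_one hδ hs)
  have h2 := cutoff_mul_div_le_one hδ hs
  have h3 := mul_le_mul_of_nonneg_left h1 ha
  unfold cutoffSlope
  linarith

lemma tendsto_cutoffSlope : Tendsto (fun δ : ℝ => cutoffSlope a δ s) (𝓝[>] 0) (𝓝 a) := by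
  have h := (((tendsto_cutoff (s := s)).pow 2).const_mul a).add
    (((tendsto_cutoff (s := s)).mul (tendsto_div_const_nhdsGT_zero (s := s))).const_mul 2)
  simpa [cutoffSlope] using h

lemma hasDerivAt_cutoff_sq_mul_rpow (hs : 0 < s) :
    HasDerivAt (fun s => cutoff δ s ^ 2 * s ^ a) (cutoffSlope a δ s * s ^ (a - 1)) s := by
  have h1 : HasDerivAt (fun s => 1 - δ / s) (δ / s ^ 2) s := by
    refine (((hasDerivAt_inv hs.ne').const_mul δ).const_sub 1).congr_deriv ?_
    ring
  have h2 := (hasDerivAt_max_zero_sq (1 - δ / s)).comp s h1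
  have h3 := h2.mul (Real.hasDerivAt_rpow_const (p := a) (Or.inl hs.ne'))
  refine h3.congr_deriv ?_
  simp only [cutoffSlope, cutoff, Function.comp]
  rw [Real.rpow_sub_one hs.ne']
  field_simp
  ring

lemma continuousOn_cutoff : ContinuousOn (cutoff δ) (Ioi 0) :=
  continuousOn_const.sup (continuousOn_const.sub
    (continuousOn_const.div continuousOn_id fun _ hs => ne_of_gt hs))

lemma continuousOn_cutoffSlope : ContinuousOn (cutoffSlope a δ) (Ioi 0) :=
  (continuousOn_const.mul (continuousOn_cutoff.pow 2)).add
    (continuousOn_const.mul (continuousOn_cutoff.mul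
      (continuousOn_const.div continuousOn_id fun _ hs => ne_of_gt hs)))

end Truncation

section Limits

open Filter Topology

variable {w : ℝ → ℝ} {p η ε : ℝ}

/-- Dominated convergence against the common density, for bounded multipliers. -/
lemma tendsto_integral_rpow_mul_density (hp : 1 < p) (hη : 0 < η) (hε : 0 < ε)
    (hw_pos : ∀ t, 0 < t → 0 < w t) (hw : ContinuousOn w (Ioi 0))
    (hwQ : ∀ b, 0 < b → IntegrableOn (fun s => (w s)⁻¹) (Ioo 0 b))
    {k : ℝ → ℝ → ℝ} {M l : ℝ} (hk_cont : ∀ δ, ContinuousOn (k δ) (Ioi 0))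
    (hk_nonneg : ∀ δ s, 0 < δ → 0 < s → 0 ≤ k δ s)
    (hk_le : ∀ δ s, 0 < δ → 0 < s → k δ s ≤ M)
    (hk_lim : ∀ s, 0 < s → Tendsto (fun δ => k δ s) (𝓝[>] 0) (𝓝 l)) :
    Tendsto (fun δ => ∫ t in (0:ℝ)..η,
        k δ (fQ w t) ^ p * (fQ w t ^ (ε * p - 1) * (w t)⁻¹)) (𝓝[>] 0)
      (𝓝 (l ^ p * (fQ w η ^ (ε * p) / (p * ε)))) := by
  obtain ⟨hint, heq⟩ := intervalIntegrable_and_integral_fQ_rpow hp hη hε hw_pos hw hwQ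
  rw [← heq, ← intervalIntegral.integral_const_mul]
  have hfpos : ∀ t ∈ Ioc 0 η, 0 < fQ w t := fun t ht => fQ_pos hw_pos hwQ ht.1
  have hfc : ContinuousOn (fQ w) (Ioc 0 η) := (continuousOn_fQ hwQ hη).mono Ioc_subset_Icc_self
  have hp0 : 0 ≤ p := by linarith
  refine intervalIntegral.tendsto_integral_filter_of_dominated_convergence
    (fun t => M ^ p * (fQ w t ^ (ε * p - 1) * (w t)⁻¹)) ?_ ?_ (hint.const_mul _) ?_
  · refine Eventually.of_forall fun δ => ?_
    rw [uIoc_of_le hη.le]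
    refine ContinuousOn.aestronglyMeasurable ?_ measurableSet_Ioc
    refine (((hk_cont δ).comp hfc hfpos).rpow_const fun _ _ => Or.inr hp0).mul
      ((hfc.rpow_const fun t ht => Or.inl (hfpos t ht).ne').mul
        ((continuousOn_inv_Ioi hw_pos hw).mono fun t ht => ht.1))
  · filter_upwards [self_mem_nhdsWithin] with δ hδ
    refine Eventually.of_forall fun t ht => ?_
    rw [uIoc_of_le hη.le] at ht
    have hf := hfpos t ht
    have hwt := hw_pos t ht.1
    have hk0 := hk_nonneg δ _ hδ hf
    rw [Real.norm_of_nonneg (by positivity)]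
    have := hk_le δ _ hδ hf
    gcongr
  · refine Eventually.of_forall fun t ht => ?_
    rw [uIoc_of_le hη.le] at ht
    exact ((hk_lim _ (hfpos t ht)).rpow_const (Or.inr hp0)).mul_const _

/-- The normalized Hardy deficit of `uTest w p ε`. -/
lemma uTest_deficit_eq (hp : 1 < p) (hη : 0 < η) (hε : 0 < ε)
    (hw_pos : ∀ t, 0 < t → 0 < w t) (hw : ContinuousOn w (Ioi 0))
    (hwQ : ∀ b, 0 < b → IntegrableOn (fun s => (w s)⁻¹) (Ioo 0 b)) :
    ((∫ t in (0:ℝ)..η, |deriv (uTest w p ε) t| ^ p * Wp w p t)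
        - (1 - 1 / p) ^ p * ∫ t in (0:ℝ)..η, |uTest w p ε t| ^ p * Wp w p t / FQ w t ^ p)
        * fQ w η ^ (p - 1) / uTest w p ε η ^ p
      = (((p - 1) / p + ε) ^ p - ((p - 1) / p) ^ p) / ε / p := by
  have hf := fQ_pos hw_pos hwQ hη
  have hexp : ((p - 1) / p + ε) * p = ε * p + (p - 1) := by
    field_simp
    ring
  have hbase : 1 - 1 / p = (p - 1) / p := by field_simp
  rw [integral_abs_deriv_uTest hp hη hε hw_pos hw hwQ,
    integral_abs_uTest hp hη hε hw_pos hw hwQ, uTest, ← Real.rpow_mul hf.le, hexp,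
    Real.rpow_add hf, hbase]
  have := (Real.rpow_pos_of_pos hf (ε * p)).ne'
  have := (Real.rpow_pos_of_pos hf (p - 1)).ne'
  field_simp

lemma tendsto_rpow_difference_quotient (hp : 1 < p) :
    Tendsto (fun ε : ℝ => (((p - 1) / p + ε) ^ p - ((p - 1) / p) ^ p) / ε / p) (𝓝[>] 0)
      (𝓝 (((1 - 1 / p) ^ p) ^ ((p - 1) / p))) := by
  have hb : 0 < (p - 1) / p := div_pos (by linarith) (by linarith)
  have hbase : 1 - 1 / p = (p - 1) / p := by field_simp
  have hd := (Real.hasDerivAt_rpow_const (p := p) (Or.inl hb.ne')).tendsto_slope_zero_right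
  have := hd.div_const p
  rw [hbase, ← Real.rpow_mul hb.le, mul_div_cancel₀ _ (by linarith : p ≠ 0)]
  rw [mul_div_cancel_left₀ _ (by linarith : p ≠ 0)] at this
  refine this.congr fun ε => ?_
  simp only [smul_eq_mul]
  ring

/-- Any admissible boundary constant satisfies the Hardy inequality on `uTest w p ε`, by
truncating near the origin. -/
lemma boundary_constant_le_uTest_deficit (hp : 1 < p) (hη : 0 < η) (hε : 0 < ε)
    (hw_pos : ∀ t, 0 < t → 0 < w t) (hw : ContinuousOn w (Ioi 0))
    (hwQ : ∀ b, 0 < b → IntegrableOn (fun s => (w s)⁻¹) (Ioo 0 b)) {c : ℝ}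
    (hc : ∀ u u' : ℝ → ℝ,
      (∀ t ∈ Ioc (0:ℝ) η, HasDerivWithinAt u (u' t) (Ioc (0:ℝ) η) t) →
      ContinuousOn u' (Ioc (0:ℝ) η) →
      (∃ a, 0 < a ∧ ∀ t ≤ a, u t = 0) →
      (∫ t in (0:ℝ)..η, |u' t| ^ p * Wp w p t)
      ≥ (1 - 1 / p) ^ p * (∫ t in (0:ℝ)..η, |u t| ^ p * Wp w p t / FQ w t ^ p)
        + c * fQ w η ^ (1 - p) * |u η| ^ p) :
    c ≤ (((p - 1) / p + ε) ^ p - ((p - 1) / p) ^ p) / ε / p := by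
  have hf := fQ_pos hw_pos hwQ hη
  have hfpos : ∀ t ∈ Ioc 0 η, 0 < fQ w t := fun t ht => fQ_pos hw_pos hwQ ht.1
  have hfc : ContinuousOn (fQ w) (Ioc 0 η) := (continuousOn_fQ hwQ hη).mono Ioc_subset_Icc_self
  have hb : 0 < (p - 1) / p := div_pos (by linarith) (by linarith)
  set a := (p - 1) / p + ε with ha_def
  have ha : 0 ≤ a := by positivity
  have htrunc : ∀ δ, 0 < δ →
      (1 - 1 / p) ^ p * (∫ t in (0:ℝ)..η,
          (cutoff δ (fQ w t) ^ 2) ^ p * (fQ w t ^ (ε * p - 1) * (w t)⁻¹))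
        + c * fQ w η ^ (1 - p) * |cutoff δ (fQ w η) ^ 2 * fQ w η ^ a| ^ p
      ≤ ∫ t in (0:ℝ)..η,
          cutoffSlope a δ (fQ w t) ^ p * (fQ w t ^ (ε * p - 1) * (w t)⁻¹) := by
    intro δ hδ
    set u : ℝ → ℝ := (Ioi 0).indicator fun t => cutoff δ (fQ w t) ^ 2 * fQ w t ^ a
    have hu_pos : ∀ t, 0 < t → u t = cutoff δ (fQ w t) ^ 2 * fQ w t ^ a := fun t ht =>
      indicator_of_mem (mem_Ioi.2 ht) _
    have key := hc u (fun t => cutoffSlope a δ (fQ w t) * fQ w t ^ (a - 1) * (w t)⁻¹) ?_ ?_ ?_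
    · rw [hu_pos η hη] at key
      refine le_of_eq_of_le ?_ (key.le.trans_eq ?_)
      · congr 2
        refine intervalIntegral.integral_congr_Ioo_of_le hη.le fun t ht' => ?_
        have ht := Ioo_subset_Ioc_self ht'
        simp only [Wp, FQ]
        rw [hu_pos t ht.1]
        exact (abs_mul_rpow_rpow_mul_rpow_div_eq hp (hfpos t ht) (hw_pos t ht.1)
          (sq_nonneg _)).symm
      · refine intervalIntegral.integral_congr_Ioo_of_le hη.le fun t ht' => ?_
        have ht := Ioo_subset_Ioc_self ht'
        exact abs_rpow_mul_div_rpow_mul_rpow_eq hp (hfpos t ht) (hw_pos t ht.1)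
          (cutoffSlope_nonneg ha hδ (hfpos t ht))
    · intro t ht
      have h := (hasDerivAt_cutoff_sq_mul_rpow (δ := δ) (a := a) (hfpos t ht)).comp t
        (hasDerivAt_fQ hw_pos hw hwQ ht.1)
      refine (h.congr_of_eventuallyEq ?_).hasDerivWithinAt
      filter_upwards [Ioi_mem_nhds ht.1] with y hy
      exact hu_pos y hy
    · exact ((continuousOn_cutoffSlope.comp hfc hfpos).mul
        (hfc.rpow_const fun t ht => Or.inl (hfpos t ht).ne')).mul
        ((continuousOn_inv_Ioi hw_pos hw).mono fun t ht => ht.1)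
    · have h0 : Tendsto (fQ w) (𝓝[>] 0) (𝓝 0) := by
        have := (continuousOn_fQ hwQ hη) 0 (left_mem_Icc.2 hη.le)
        rw [ContinuousWithinAt, fQ_zero] at this
        rw [← nhdsWithin_Ioc_eq_nhdsGT hη]
        exact this.mono_left (nhdsWithin_mono _ Ioc_subset_Icc_self)
      obtain ⟨b, hb0, hbs⟩ := mem_nhdsGT_iff_exists_Ioc_subset.1 (h0 (Iio_mem_nhds hδ))
      refine ⟨b, hb0, fun t ht => ?_⟩
      rcases le_or_gt t 0 with ht0 | ht0
      · exact indicator_of_notMem (by simpa using ht0) _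
      · have hlt : fQ w t < δ := hbs ⟨ht0, ht⟩
        rw [hu_pos t ht0, cutoff_eq_zero (fQ_pos hw_pos hwQ ht0) hlt.le]
        simp
  have hR := tendsto_integral_rpow_mul_density (k := fun δ s => cutoffSlope a δ s) hp hη hε
    hw_pos hw hwQ (fun δ => continuousOn_cutoffSlope)
    (fun δ s hδ hs => cutoffSlope_nonneg ha hδ hs) (fun δ s hδ hs => cutoffSlope_le ha hδ hs)
    (fun s _ => tendsto_cutoffSlope)
  have hL := tendsto_integral_rpow_mul_density (k := fun δ s => cutoff δ s ^ 2) (l := 1) hp hη hε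
    hw_pos hw hwQ (fun δ => continuousOn_cutoff.pow 2) (fun δ s _ _ => sq_nonneg _)
    (fun δ s hδ hs => pow_le_one₀ cutoff_nonneg (cutoff_le_one hδ hs))
    (fun s _ => by simpa using (tendsto_cutoff (s := s)).pow 2)
  have hB : Tendsto (fun δ => |cutoff δ (fQ w η) ^ 2 * fQ w η ^ a| ^ p) (𝓝[>] 0)
      (𝓝 (|1 ^ 2 * fQ w η ^ a| ^ p)) :=
    (((tendsto_cutoff.pow 2).mul_const _).abs).rpow_const (Or.inr (by linarith))
  have hlim := le_of_tendsto_of_tendsto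
    ((hL.const_mul ((1 - 1 / p) ^ p)).add (hB.const_mul (c * fQ w η ^ (1 - p)))) hR
    (by filter_upwards [self_mem_nhdsWithin] with δ hδ using htrunc δ hδ)
  have hexp : a * p = ε * p + (p - 1) := by
    rw [ha_def]
    field_simp
    ring
  have hbase : 1 - 1 / p = (p - 1) / p := by field_simp
  rw [one_pow, one_mul, Real.one_rpow, one_mul, abs_of_nonneg (by positivity),
    ← Real.rpow_mul hf.le, hexp, Real.rpow_add hf, hbase, ← neg_sub p 1, Real.rpow_neg hf.le]
    at hlim
  have hX := Real.rpow_pos_of_pos hf (ε * p)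
  have hY := Real.rpow_pos_of_pos hf (p - 1)
  have hcancel : c * (fQ w η ^ (p - 1))⁻¹ * (fQ w η ^ (ε * p) * fQ w η ^ (p - 1))
      = c * fQ w η ^ (ε * p) := by field_simp
  rw [hcancel] at hlim
  have hpε : 0 < p * ε := by positivity
  rw [div_div, mul_comm ε p, le_div_iff₀ hpε]
  refine le_of_mul_le_mul_right ?_ hX
  rw [← mul_div_assoc, ← mul_div_assoc, div_add' _ _ _ hpε.ne',
    div_le_div_iff_of_pos_right hpε] at hlim
  linarith

end Limits

/-- Sharpness of the boundary constant `Λ_p^{1/p'}` for `w ∈ Q(ℝ₊)`: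
exact computation of both sides of the Hardy inequality on the test functions
`u_ε = f_η^{1/p'+ε}`, the resulting limit as `ε → 0⁺`, and the consequence that the
boundary constant cannot be replaced by any larger one. -/
theorem hardy_Q_boundary_constant_sharp (p η : ℝ) (hp : 1 < p) (hη : 0 < η)
    (w : ℝ → ℝ)
    (hw_pos : ∀ t, 0 < t → 0 < w t)
    (hw_smooth : ContDiffOn ℝ 1 w (Set.Ioi 0))
    (hw_lim : ∃ a : ENNReal, Filter.Tendsto (fun t => ENNReal.ofReal (w t))
        (nhdsWithin (0:ℝ) (Set.Ioi 0)) (nhds a))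
    (hwQ : ∀ b, 0 < b → MeasureTheory.IntegrableOn (fun s => (w s)⁻¹) (Set.Ioo 0 b)) :
    (∀ ε : ℝ, 0 < ε →
      (∫ t in (0:ℝ)..η, |deriv (uTest w p ε) t| ^ p * Wp w p t)
        = ((p - 1) / p + ε) ^ p * fQ w η ^ (ε * p) / (p * ε)
      ∧ (1 - 1 / p) ^ p *
          (∫ t in (0:ℝ)..η, |uTest w p ε t| ^ p * Wp w p t / FQ w t ^ p)
        = ((p - 1) / p) ^ p * fQ w η ^ (ε * p) / (p * ε))
    ∧ Filter.Tendsto (fun ε : ℝ =>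
        ((∫ t in (0:ℝ)..η, |deriv (uTest w p ε) t| ^ p * Wp w p t)
          - (1 - 1 / p) ^ p *
              ∫ t in (0:ℝ)..η, |uTest w p ε t| ^ p * Wp w p t / FQ w t ^ p)
          * fQ w η ^ (p - 1) / uTest w p ε η ^ p)
        (nhdsWithin (0:ℝ) (Set.Ioi 0)) (nhds (((1 - 1 / p) ^ p) ^ ((p - 1) / p)))
    ∧ ∀ c : ℝ,
        (∀ u u' : ℝ → ℝ,
          (∀ t ∈ Set.Ioc (0:ℝ) η, HasDerivWithinAt u (u' t) (Set.Ioc (0:ℝ) η) t) →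
          ContinuousOn u' (Set.Ioc (0:ℝ) η) →
          (∃ a, 0 < a ∧ ∀ t ≤ a, u t = 0) →
          (∫ t in (0:ℝ)..η, |u' t| ^ p * Wp w p t)
          ≥ (1 - 1 / p) ^ p *
              (∫ t in (0:ℝ)..η, |u t| ^ p * Wp w p t / FQ w t ^ p)
            + c * fQ w η ^ (1 - p) * |u η| ^ p) →
        c ≤ ((1 - 1 / p) ^ p) ^ ((p - 1) / p) := by
  have hw : ContinuousOn w (Ioi 0) := hw_smooth.continuousOn
  refine ⟨fun ε hε => ⟨integral_abs_deriv_uTest hp hη hε hw_pos hw hwQ, ?_⟩, ?_, fun c hc => ?_⟩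
  · rw [integral_abs_uTest hp hη hε hw_pos hw hwQ, mul_div_assoc]
    congr 2
    field_simp
  · refine (tendsto_rpow_difference_quotient hp).congr' ?_
    filter_upwards [self_mem_nhdsWithin] with ε hε
    exact (uTest_deficit_eq hp hη hε hw_pos hw hwQ).symm
  · refine ge_of_tendsto (tendsto_rpow_difference_quotient hp) ?_
    filter_upwards [self_mem_nhdsWithin] with ε hε
    exact boundary_constant_le_uTest_deficit hp hη hε hw_pos hw hwQ hc
end
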